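/- Let n ≥ 1 and d even with 2d > n. Then the quasicode A* given by A*_0 = 1, A*_d = n/(2d−n), and A*_i = 0 otherwise is a feasible solution of the (n,d) Delsarte linear program, i.e., it satisfies all the Delsarte inequalities Σ_{i=0}^{n} A*_i K_j(i;n) ≥ 0 for all j ∈ [1,n]. -/

import Mathlib

/-!
Write `m = n - d` and `t = 2d - n ≥ 1`, so that `n = 2m + t`. The value `K_j(d;n)` is the coefficient
of `z^j` in `(1 - z)^d (1 + z)^(n-d) = (1 - z²)^m (1 - z)^t` (`kraw_eq_coeff`). The key estimate
(`key_bound`) is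
`n |K_j(d;n)| ≤ t C(n,j)` for `1 ≤ j ≤ n - 1`, which gives
`K_j(0;n) + n / (2d - n) K_j(d;n) ≥ 0` since `K_j(0;n) = C(n,j)`. For `j = n` the coefficient is
`(-1)^d = 1`, and this is the only place where the parity of `d` matters.

The estimate is proved by induction on `m` with `t` fixed. For `m = 0` it is an equality.
Multiplication by `1 - z²` gives `c_{m+1}(j) = c_m(j) - c_m(j-2)`, so with `N = 2m + t` the triangle
inequality reduces the step to `C(N,j) + C(N,j-2) ≤ N C(N,j-1)` (`choose_add_choose_le`).
The extreme coefficients `c_m(0)` and `c_m(N)`, of absolute value `1`, violate the estimate when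
`m > 0`; the steps which involve them have enough slack to absorb the error.
-/

open Finset

/-- Integer binomial coefficient with convention C(a,b)=0 unless 0 ≤ b ≤ a. -/
def intChoose (a b : ℤ) : ℤ :=
  if 0 ≤ a ∧ 0 ≤ b then (a.toNat.choose b.toNat : ℤ) else 0

/-- Krawtchouk polynomial K_j(i;n) = Σ_{k=0}^{j} (-1)^k C(i,k) C(n-i,j-k),
with the convention K_j(i;n)=0 if j ∉ [0,n] or i ∉ [0,n]. -/
def kraw (n : ℕ) (j i : ℤ) : ℤ :=
  ∑ k ∈ Finset.range (j.toNat + 1),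
    (-1) ^ k * intChoose i k * intChoose ((n : ℤ) - i) (j - k)

/-- Feasibility for the (n,d) Delsarte linear program: A_0 = 1, A_i = 0 for
1 ≤ i ≤ d-1, A_i ≥ 0 for i ≤ n, and the Delsarte inequalities
Σ_{i=0}^{n} A_i K_j(i;n) ≥ 0 for all 1 ≤ j ≤ n. -/
def delsarteFeasible (n d : ℕ) (A : ℕ → ℚ) : Prop :=
  A 0 = 1 ∧ (∀ i : ℕ, 1 ≤ i → i ≤ d - 1 → A i = 0) ∧
    (∀ i : ℕ, i ≤ n → 0 ≤ A i) ∧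
    ∀ j : ℕ, 1 ≤ j → j ≤ n →
      0 ≤ ∑ i ∈ Finset.range (n + 1), A i * (kraw n j i : ℚ)

open Polynomial in
/-- The polynomial `(1 - z)^(m+t) (1 + z)^m`, the generating function in `j` of
`K_j(m + t; 2m + t)`. -/
noncomputable def genPoly (m t : ℕ) : Polynomial ℤ := (1 - X) ^ (m + t) * (1 + X) ^ m

open Polynomial in
theorem coeff_one_sub_X_pow (d k : ℕ) :
    ((1 - X : Polynomial ℤ) ^ d).coeff k = (-1) ^ k * (d.choose k : ℤ) := by
  have h : (1 - X : Polynomial ℤ) ^ d = ((1 + X : Polynomial ℤ) ^ d).comp (C (-1) * X) := by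
    simp [sub_eq_add_neg]
  rw [h, comp_C_mul_X_coeff, coeff_one_add_X_pow]
  ring

theorem intChoose_natCast (a b : ℕ) : intChoose a b = (a.choose b : ℤ) := by
  simp [intChoose]

open Polynomial in
theorem kraw_eq_coeff (n j d : ℕ) (h : d ≤ n) :
    kraw n j d = ((1 - X : Polynomial ℤ) ^ d * (1 + X) ^ (n - d)).coeff j := by
  rw [coeff_mul, Finset.Nat.sum_antidiagonal_eq_sum_range_succ_mk, kraw, Int.toNat_natCast]
  refine Finset.sum_congr rfl fun k hk => ?_
  have hk' : k ≤ j := by simpa [Nat.lt_succ_iff] using hk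
  rw [← Nat.cast_sub h, ← Nat.cast_sub hk', intChoose_natCast, intChoose_natCast,
    coeff_one_sub_X_pow, coeff_one_add_X_pow]

open Polynomial in
theorem genPoly_succ (m t : ℕ) : genPoly (m + 1) t = genPoly m t - genPoly m t * X ^ 2 := by
  unfold genPoly
  ring

theorem coeff_genPoly_succ (m t k : ℕ) :
    (genPoly (m + 1) t).coeff (k + 2) = (genPoly m t).coeff (k + 2) - (genPoly m t).coeff k := by
  rw [genPoly_succ, Polynomial.coeff_sub, Polynomial.coeff_mul_X_pow]

theorem coeff_genPoly_zero_left (t j : ℕ) :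
    (genPoly 0 t).coeff j = (-1) ^ j * (t.choose j : ℤ) := by
  simp [genPoly, coeff_one_sub_X_pow]

theorem coeff_genPoly_zero (m t : ℕ) : (genPoly m t).coeff 0 = 1 := by
  induction m with
  | zero => simp [coeff_genPoly_zero_left]
  | succ m ih => simp [genPoly_succ, ih]

theorem coeff_genPoly_one (m t : ℕ) : (genPoly m t).coeff 1 = -(t : ℤ) := by
  induction m with
  | zero => simp [coeff_genPoly_zero_left]
  | succ m ih => simp [genPoly_succ, ih, Polynomial.coeff_mul_X_pow']

theorem coeff_genPoly_of_gt (m t j : ℕ) (h : 2 * m + t < j) : (genPoly m t).coeff j = 0 := by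
  induction m generalizing j with
  | zero => simp [coeff_genPoly_zero_left, Nat.choose_eq_zero_of_lt (by omega : t < j)]
  | succ m ih =>
    obtain ⟨k, rfl⟩ : ∃ k, j = k + 2 := ⟨j - 2, by omega⟩
    rw [coeff_genPoly_succ, ih _ (by omega), ih _ (by omega), sub_zero]

theorem coeff_genPoly_top (m t : ℕ) : (genPoly m t).coeff (2 * m + t) = (-1) ^ (m + t) := by
  induction m with
  | zero => simp [coeff_genPoly_zero_left]
  | succ m ih =>
    rw [show 2 * (m + 1) + t = 2 * m + t + 2 by ring, coeff_genPoly_succ, ih,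
      coeff_genPoly_of_gt _ _ _ (by omega)]
    ring

theorem coeff_genPoly_subtop (m t : ℕ) :
    |(genPoly m (t + 1)).coeff (2 * m + t)| = t + 1 := by
  induction m with
  | zero =>
    rw [coeff_genPoly_zero_left, abs_mul, abs_pow]
    simp
    positivity
  | succ m ih =>
    rw [show 2 * (m + 1) + t = 2 * m + t + 2 by ring, coeff_genPoly_succ,
      coeff_genPoly_of_gt _ _ _ (by omega), zero_sub, abs_neg, ih]

/-- Each neighbour of `C(N, k+1)` is at most `(N - 1) / 2` times it. -/
theorem choose_add_choose_le (N k : ℕ) (h : k + 2 ≤ N) :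
    N.choose k + N.choose (k + 2) ≤ N * N.choose (k + 1) := by
  obtain ⟨s, rfl⟩ := Nat.exists_eq_add_of_le h
  have h1 := Nat.choose_succ_right_eq (k + 2 + s) k
  have h2 := Nat.choose_succ_right_eq (k + 2 + s) (k + 1)
  rw [show k + 2 + s - k = s + 2 by omega] at h1
  rw [show k + 2 + s - (k + 1) = s + 1 by omega] at h2
  set A := (k + 2 + s).choose k
  set M := (k + 2 + s).choose (k + 1)
  set B := (k + 2 + s).choose (k + 1 + 1)
  have h3 : 2 * A ≤ M * (k + 1) := by rw [h1]; nlinarith [Nat.zero_le (A * s)]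
  have h4 : 2 * B ≤ M * (s + 1) := by rw [← h2]; nlinarith [Nat.zero_le (B * k)]
  change A + B ≤ _
  nlinarith [Nat.zero_le (M * k), Nat.zero_le (M * s)]

theorem choose_add_two (N k : ℕ) : ((N + 2).choose (k + 2) : ℤ) =
    N.choose k + 2 * N.choose (k + 1) + N.choose (k + 2) := by
  rw [Nat.choose_succ_succ' (N + 1), Nat.choose_succ_succ' N, Nat.choose_succ_succ' N]
  push_cast
  ring

/-- The inductive step of `key_bound` at `j = 2` and `j = N`, where exactly one of the two
coefficients involved, of absolute value `1`, is extreme. Here `x` is the absolute value of the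
other one and `B = C(N, 2)`. -/
theorem extreme_step {N t x B : ℤ} (hN : 0 < N) (ht : 1 ≤ t)
    (hB : 2 * B = N * (N - 1)) (hx : N * x ≤ t * B) :
    (N + 2) * (x + 1) ≤ t * (1 + 2 * N + B) := by
  have h : 0 ≤ N * (t * (1 + 2 * N + B) - (N + 2) * (x + 1)) := by
    have h1 : (N + 2) * (N * x) ≤ (N + 2) * (t * B) := by gcongr
    have h2 : 0 ≤ (t - 1) * (N * (N + 2)) :=
      mul_nonneg (by linarith) (by positivity)
    have h3 : t * (2 * B) = t * (N * (N - 1)) := by rw [hB]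
    nlinarith
  linarith [nonneg_of_mul_nonneg_right h hN]

/-- `n |K_j(d;n)| ≤ (2d - n) C(n,j)` for `0 < j < n`, with `d = m + t` and `n = 2m + t`. -/
theorem key_bound (m t : ℕ) (ht : 1 ≤ t) (j : ℕ) (hj : 1 ≤ j) (hjn : j < 2 * m + t) :
    ((2 * m + t : ℕ) : ℤ) * |(genPoly m t).coeff j| ≤ t * ((2 * m + t).choose j : ℤ) := by
  induction m generalizing j with
  | zero =>
    rw [coeff_genPoly_zero_left, abs_mul, abs_pow]
    simp
  | succ m ih =>
    obtain rfl | ⟨k, rfl⟩ : j = 1 ∨ ∃ k, j = k + 2 := by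
      rcases Nat.lt_or_ge j 2 with h | h
      · left; omega
      · right; exact ⟨j - 2, by omega⟩
    · rw [coeff_genPoly_one, abs_neg, Nat.abs_cast, Nat.choose_one_right, mul_comm]
    rw [show 2 * (m + 1) + t = 2 * m + t + 2 by ring] at hjn ⊢
    rcases Nat.lt_or_ge (2 * m + t) (k + 2) with hk | hk
    · -- `j = n - 1`
      obtain ⟨s, rfl⟩ := Nat.exists_eq_add_of_le' ht
      obtain rfl : k = 2 * m + s := by omega
      rw [coeff_genPoly_succ, coeff_genPoly_of_gt _ _ _ (by omega), zero_sub, abs_neg,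
        coeff_genPoly_subtop, show 2 * m + (s + 1) + 2 = 2 * m + s + 2 + 1 by ring,
        Nat.choose_succ_self_right]
      push_cast
      exact le_of_eq (by ring)
    have hN : (0 : ℤ) < ((2 * m + t : ℕ) : ℤ) := by exact_mod_cast (by omega : 0 < 2 * m + t)
    have ht' : (1 : ℤ) ≤ t := by exact_mod_cast ht
    have h2 : 2 * ((2 * m + t).choose 2 : ℤ) =
        ((2 * m + t : ℕ) : ℤ) * (((2 * m + t : ℕ) : ℤ) - 1) := by
      have := Nat.choose_succ_right_eq (2 * m + t) 1
      rw [Nat.choose_one_right] at this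
      rw [← Nat.cast_pred (by omega), mul_comm]
      exact_mod_cast this
    have htri : |(genPoly (m + 1) t).coeff (k + 2)| ≤
        |(genPoly m t).coeff (k + 2)| + |(genPoly m t).coeff k| := by
      rw [coeff_genPoly_succ]
      exact abs_sub _ _
    rw [choose_add_two]
    refine (mul_le_mul_of_nonneg_left htri (Nat.cast_nonneg _)).trans ?_
    have htop : |(genPoly m t).coeff (2 * m + t)| = 1 := by
      rw [coeff_genPoly_top]; simp
    have hbot : |(genPoly m t).coeff 0| = 1 := by
      rw [coeff_genPoly_zero]; simp
    rcases Nat.eq_zero_or_pos k with rfl | hk0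
    · rcases hk.eq_or_lt with hk2 | hk2
      · -- `j = 2 = N` forces `m = 0` and `t = 2`
        obtain rfl : m = 0 := by omega
        obtain rfl : t = 2 := by omega
        norm_num [coeff_genPoly_zero_left]
      · have := extreme_step hN ht' h2 (ih 2 (by omega) (by omega))
        rw [hbot]
        simpa using this
    · rcases hk.eq_or_lt with hk2 | hk2
      · have hx := ih k hk0 (by omega)
        have hs : (2 * m + t).choose k = (2 * m + t).choose 2 :=
          Nat.choose_symm_of_eq_add (by omega)
        have hs1 : (2 * m + t).choose (k + 1) = 2 * m + t := by
          rw [Nat.choose_symm_of_eq_add (by omega : 2 * m + t = k + 1 + 1), Nat.choose_one_right]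
        rw [hs] at hx
        have := extreme_step hN ht' h2 hx
        rw [hs, hs1, hk2, htop, Nat.choose_self]
        push_cast at this ⊢
        linarith
      · have hx := ih k hk0 (by omega)
        have hy := ih (k + 2) (by omega) hk2
        have hc : ((2 * m + t).choose k : ℤ) + (2 * m + t).choose (k + 2) ≤
            ((2 * m + t : ℕ) : ℤ) * (2 * m + t).choose (k + 1) := by
          exact_mod_cast choose_add_choose_le _ _ hk
        rw [Nat.cast_add (2 * m + t) 2, Nat.cast_two]
        generalize ((2 * m + t : ℕ) : ℤ) = N at *
        generalize |(genPoly m t).coeff k| = x at *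
        generalize |(genPoly m t).coeff (k + 2)| = y at *
        generalize ((2 * m + t).choose k : ℤ) = A at *
        generalize ((2 * m + t).choose (k + 1) : ℤ) = M at *
        generalize ((2 * m + t).choose (k + 2) : ℤ) = B at *
        have h : 0 ≤ N * (t * (A + 2 * M + B) - (N + 2) * (y + x)) := by
          have h1 : (N + 2) * (N * x + N * y) ≤ (N + 2) * (t * A + t * B) := by gcongr
          have h3 : (t : ℤ) * (A + B) ≤ t * (N * M) := by gcongr
          nlinarith
        linarith [nonneg_of_mul_nonneg_right h hN]

/-- For d even with 2d > n (and d ≤ n), the quasicode A*_0 = 1, A*_d = n/(2d-n),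
A*_i = 0 otherwise, is feasible for the (n,d) Delsarte linear program. -/
theorem upper_half_even_primal_feasible (n d : ℕ) (hn : 1 ≤ n) (hd : Even d)
    (hdn : d ≤ n) (h2d : n < 2 * d) :
    delsarteFeasible n d
      (fun i => if i = 0 then 1 else if i = d then (n : ℚ) / (2 * d - n) else 0) := by
  have hd0 : d ≠ 0 := by omega
  have hpos : (0 : ℚ) < 2 * d - n := by
    have : (n : ℚ) < 2 * d := by exact_mod_cast h2d
    linarith
  refine ⟨by simp, fun i h1 h2 => ?_, fun i _ => ?_, fun j hj hjn => ?_⟩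
  · simp [show i ≠ 0 by omega, show i ≠ d by omega]
  · dsimp only
    split_ifs <;> positivity
  have hsum : ∑ i ∈ Finset.range (n + 1),
      (if i = 0 then 1 else if i = d then (n : ℚ) / (2 * d - n) else 0) * (kraw n j i : ℚ) =
      kraw n j (0 : ℕ) + (n : ℚ) / (2 * d - n) * kraw n j d := by
    rw [← Finset.sum_subset (s₁ := {0, d}), Finset.sum_pair hd0.symm]
    · simp [hd0]
    · intro i hi
      simp only [Finset.mem_insert, Finset.mem_singleton] at hi
      rw [Finset.mem_range]
      omega
    · intro i _ hi
      simp only [Finset.mem_insert, Finset.mem_singleton, not_or] at hi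
      simp [hi.1, hi.2]
  rw [hsum, kraw_eq_coeff n j 0 (Nat.zero_le _)]
  obtain ⟨m, t, rfl, rfl⟩ : ∃ m t, d = m + t ∧ n = 2 * m + t :=
    ⟨n - d, 2 * d - n, by omega, by omega⟩
  have hk : kraw (2 * m + t) j (m + t : ℕ) = (genPoly m t).coeff j := by
    rw [kraw_eq_coeff _ _ _ hdn, genPoly, show 2 * m + t - (m + t) = m by omega]
  rw [hk, pow_zero, one_mul, Nat.sub_zero, Polynomial.coeff_one_add_X_pow]
  rcases hjn.eq_or_lt with rfl | hlt
  · rw [coeff_genPoly_top, hd.neg_one_pow]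
    simp only [Int.cast_one, mul_one]
    positivity
  · have hb := key_bound m t (by omega) j hj hlt
    have hb' : -((t : ℤ) * ((2 * m + t).choose j : ℤ)) ≤
        ((2 * m + t : ℕ) : ℤ) * (genPoly m t).coeff j := by
      have := mul_le_mul_of_nonneg_left (neg_abs_le ((genPoly m t).coeff j))
        (Nat.cast_nonneg (α := ℤ) (2 * m + t))
      linarith
    have hq : -((t : ℚ) * ((2 * m + t).choose j : ℚ)) ≤
        ((2 * m + t : ℕ) : ℚ) * ((genPoly m t).coeff j : ℚ) := by exact_mod_cast hb'
    have ht : (2 * ((m + t : ℕ) : ℚ) - ((2 * m + t : ℕ) : ℚ)) = t := by push_cast; ring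
    rw [ht] at hpos ⊢
    rw [div_mul_eq_mul_div, ← neg_le_iff_add_nonneg', le_div_iff₀ hpos]
    push_cast at hq ⊢
    linarith
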